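/- Suppose ℓ ≥ 2 and 1 ≤ s < t ≤ ℓ. Then ((λ·C_t)²·D_{st})² = 1; moreover C_t and U_t are invertible, and setting X = C_t·D_{st}·C_t⁻¹ one has X·U_t·X⁻¹·U_t⁻¹ = U_s·D_{st}. -/

import Mathlib

/-!
Weil's argument works over any finite commutative ring `R` of odd cardinality `q`, with a primitive
character `ψ` in place of `n ↦ θ ^ n` and a character of second degree `u`, that is
`u (x + y) = u x * u y * ψ (x * y)`, in place of `n ↦ θ ^ (n (n + r) / 2)`.

The square of the Fourier matrix `F` is `q` times the permutation matrix of `x ↦ -x`. So `C_t ^ 2`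
is `q` times the reflection of the `t`-th coordinate, which conjugates `D_{st}` into its inverse;
this gives the first relation up to the scalar `(λ ^ 2 q) ^ 2`, and the determinant of
`F ^ 4 = q ^ 2` shows that this scalar is `1`.

The Fourier transform turns multiplication by a character into a translation, so `X` is the
permutation matrix of the shear `η_t ↦ η_t + η_s`. The commutator of `X` with a diagonal
matrix compares that matrix with its translate, and `u (η_t + η_s) / u (η_t) = u (η_s) ψ (η_s η_t)`.
-/

open Matrix

section PermMatrix

variable {n A : Type*} [DecidableEq n]

theorem permMatrix_apply [Zero A] [One A] (σ : Equiv.Perm n) (i j : n) :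
    σ.permMatrix A i j = if σ i = j then 1 else 0 := by
  simp [PEquiv.toMatrix_apply, eq_comm]

variable [Fintype n]

theorem permMatrix_mul_diagonal [NonAssocSemiring A] (σ : Equiv.Perm n) (d : n → A) :
    σ.permMatrix A * diagonal d = diagonal (d ∘ σ) * σ.permMatrix A := by
  ext i j
  simp +contextual

theorem permMatrix_mul_diagonal_sq [Semiring A] {σ : Equiv.Perm n} (hσ : σ * σ = 1)
    (d : n → A) : (σ.permMatrix A * diagonal d) ^ 2 = diagonal fun i => d (σ i) * d i := by
  have h_sq : σ.permMatrix A * σ.permMatrix A = 1 := by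
    rw [← permMatrix_mul, hσ, permMatrix_one]
  calc (σ.permMatrix A * diagonal d) ^ 2
      = diagonal (d ∘ σ) * (σ.permMatrix A * σ.permMatrix A) * diagonal d := by
        rw [sq]
        nth_rw 1 [permMatrix_mul_diagonal]
        simp only [mul_assoc]
    _ = _ := by
        rw [h_sq, mul_one, diagonal_mul_diagonal]
        rfl

theorem isUnit_permMatrix [Semiring A] (σ : Equiv.Perm n) : IsUnit (σ.permMatrix A) :=
  ⟨⟨σ.permMatrix A, σ⁻¹.permMatrix A, by rw [← permMatrix_mul, inv_mul_cancel, permMatrix_one],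
    by rw [← permMatrix_mul, mul_inv_cancel, permMatrix_one]⟩, rfl⟩

theorem permMatrix_mul_diagonal_mul_inv [CommRing A] (σ : Equiv.Perm n) (d : n → A) :
    σ.permMatrix A * diagonal d * (σ.permMatrix A)⁻¹ = diagonal (d ∘ σ) := by
  rw [permMatrix_mul_diagonal, mul_nonsing_inv_cancel_right _ _
    ((isUnit_iff_isUnit_det _).mp (isUnit_permMatrix σ))]

end PermMatrix

section CoordMatrix

variable {ι α A : Type*} [DecidableEq ι]

/-- The permutation of `ι → α` acting by `σ` on the `t`-th coordinate. -/
def coordPerm (t : ι) (σ : Equiv.Perm α) : Equiv.Perm (ι → α) :=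
  Equiv.piCongrRight (Pi.mulSingle t σ)

theorem coordPerm_apply (t : ι) (σ : Equiv.Perm α) (η : ι → α) :
    coordPerm t σ η = Function.update η t (σ (η t)) := by
  ext i
  obtain rfl | hi := eq_or_ne i t <;> simp [coordPerm, *]

variable [Fintype ι] [DecidableEq α]

theorem sum_ite_eq_off_coord [Fintype α] [AddCommMonoid A] (t : ι) (η : ι → α)
    (f : (ι → α) → A) :
    ∑ ζ, (if ∀ i, i ≠ t → η i = ζ i then f ζ else 0) = ∑ a, f (Function.update η t a) := by
  have h_image : Finset.univ.filter (fun ζ : ι → α => ∀ i, i ≠ t → η i = ζ i) =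
      Finset.univ.image (Function.update η t) := by
    ext ζ
    simp [Function.update_eq_iff]
  rw [← Finset.sum_filter, h_image, Finset.sum_image (Function.update_injective η t).injOn]

/-- The action of a matrix on the `t`-th tensor factor of `(α → A)^{⊗ ι}`, the latter being
identified with `(ι → α) → A`. -/
def coordMatrix [Zero A] (t : ι) (M : Matrix α α A) : Matrix (ι → α) (ι → α) A :=
  of fun η ξ => if ∀ i, i ≠ t → η i = ξ i then M (η t) (ξ t) else 0

theorem coordMatrix_mul [Fintype α] [NonUnitalNonAssocSemiring A] (t : ι) (M N : Matrix α α A) :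
    coordMatrix t (M * N) = coordMatrix t M * coordMatrix t N := by
  ext η ξ
  have h_off (a : α) : (∀ i, i ≠ t → Function.update η t a i = ξ i) ↔ ∀ i, i ≠ t → η i = ξ i :=
    forall₂_congr fun i hi => by rw [Function.update_of_ne hi]
  simp only [coordMatrix, of_apply, mul_apply, ite_mul, zero_mul]
  rw [sum_ite_eq_off_coord t η fun ζ =>
    M (η t) (ζ t) * if ∀ i, i ≠ t → ζ i = ξ i then N (ζ t) (ξ t) else 0]
  simp only [h_off, Function.update_self]
  split_ifs <;> simp

theorem coordMatrix_smul {S : Type*} [Zero A] [SMulZeroClass S A] (t : ι) (c : S)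
    (M : Matrix α α A) : coordMatrix t (c • M) = c • coordMatrix t M := by
  ext η ξ
  simp [coordMatrix, Matrix.smul_apply]

theorem coordMatrix_permMatrix [Zero A] [One A] (t : ι) (σ : Equiv.Perm α) :
    coordMatrix t (σ.permMatrix A) = (coordPerm t σ).permMatrix A := by
  ext η ξ
  simp only [coordMatrix, of_apply, permMatrix_apply, coordPerm_apply, Function.update_eq_iff,
    and_comm (a := σ (η t) = ξ t), ite_and]

end CoordMatrix

section FourierMatrix

variable {R A : Type*} [CommRing R]

/-- The matrix of the Fourier transform on `R` with respect to an additive character. -/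
def fourierMatrix [Monoid A] (ψ : AddChar R A) : Matrix R R A :=
  of fun i j => ψ (i * j)

variable [Fintype R] [DecidableEq R]

theorem fourierMatrix_mul_self [CommRing A] [IsDomain A] {ψ : AddChar R A}
    (hψ : ψ.IsPrimitive) :
    fourierMatrix ψ * fourierMatrix ψ =
      (Fintype.card R : A) • (Equiv.neg R).permMatrix A := by
  ext i j
  calc ∑ k, ψ (i * k) * ψ (k * j) = ∑ k, ψ (k * (i + j)) := by
        simp only [← AddChar.map_add_eq_mul, mul_add, mul_comm]
    _ = ((if i + j = 0 then Fintype.card R else 0 : ℕ) : A) := AddChar.sum_mulShift _ hψ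
    _ = _ := by
        rw [Matrix.smul_apply, permMatrix_apply]
        simp [neg_eq_iff_add_eq_zero]

theorem det_fourierMatrix_pow_four [CommRing A] [IsDomain A] {ψ : AddChar R A}
    (hψ : ψ.IsPrimitive) :
    (fourierMatrix ψ).det ^ 4 = (Fintype.card R : A) ^ (2 * Fintype.card R) := by
  have h_sign : ((Equiv.Perm.sign (Equiv.neg R) : ℤ) : A) ^ 2 = 1 := by
    norm_cast
    simp
  calc (fourierMatrix ψ).det ^ 4 = (fourierMatrix ψ * fourierMatrix ψ).det ^ 2 := by
        rw [det_mul]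
        ring
    _ = _ := by
        rw [fourierMatrix_mul_self hψ, det_smul, det_permutation, mul_pow, h_sign]
        ring

theorem isUnit_fourierMatrix [Field A] {ψ : AddChar R A} (hψ : ψ.IsPrimitive) :
    IsUnit (fourierMatrix ψ) := by
  have h_inj : Function.Injective fun a => (ψ.mulShift a).toMonoidHom :=
    AddChar.toMonoidHomEquiv.injective.comp (AddChar.to_mulShift_inj_of_isPrimitive hψ)
  exact linearIndependent_rows_iff_isUnit.mp
    ((linearIndependent_monoidHom (Multiplicative R) A).comp _ h_inj)

end FourierMatrix

theorem card_ne_zero_of_isPrimitive {R A : Type*} [CommRing R] [Fintype R] [Field A]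
    {ψ : AddChar R A} (hψ : ψ.IsPrimitive) : (Fintype.card R : A) ≠ 0 := by
  classical
  have h_det : (fourierMatrix ψ).det ≠ 0 :=
    ((isUnit_iff_isUnit_det _).mp (isUnit_fourierMatrix hψ)).ne_zero
  have h_pow := pow_ne_zero 4 h_det
  rw [det_fourierMatrix_pow_four hψ] at h_pow
  exact ne_zero_pow (by simp) h_pow

section SecondDegree

variable {R A : Type*} [Ring R]

/-- Characters of second degree in the sense of Weil: the bicharacter measuring the failure of `u`
to be additive is `(x, y) ↦ ψ (x y)`. The value at `0` excludes `u = 0`. -/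
structure IsSecondDegree [Monoid A] (ψ : AddChar R A) (u : R → A) : Prop where
  map_zero : u 0 = 1
  map_add : ∀ x y, u (x + y) = u x * u y * ψ (x * y)

theorem IsSecondDegree.isUnit [CommMonoid A] {ψ : AddChar R A} {u : R → A}
    (hu : IsSecondDegree ψ u) (x : R) : IsUnit (u x) := by
  refine IsUnit.of_mul_eq_one (u (-x) * ψ (x * -x)) ?_
  rw [← mul_assoc, ← hu.map_add, add_neg_cancel, hu.map_zero]

variable {r : ℕ}

theorem even_mul_add_of_odd (hr : Odd r) (m : ℕ) : Even (m * (m + r)) := by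
  rw [Nat.even_mul, Nat.even_add]
  grind

theorem add_mul_add_div_two (hr : Odd r) (m n : ℕ) :
    (m + n) * (m + n + r) / 2 = m * (m + r) / 2 + n * (n + r) / 2 + m * n := by
  obtain ⟨a, ha⟩ := even_mul_add_of_odd hr m
  obtain ⟨b, hb⟩ := even_mul_add_of_odd hr n
  have h_add : (m + n) * (m + n + r) = m * (m + r) + n * (n + r) + 2 * (m * n) := by ring
  omega

theorem pow_mul_add_div_two_mod [Monoid A] {θ : A} (hr : Odd r) (hθ : θ ^ r = 1) (m : ℕ) :
    θ ^ (m % r * (m % r + r) / 2) = θ ^ (m * (m + r) / 2) := by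
  obtain ⟨a, ha⟩ := Nat.even_mul_succ_self (m / r)
  have h_multiple : r * (m / r) * (r * (m / r) + r) / 2 = r * (r * a) := by
    refine Nat.div_eq_of_eq_mul_right two_pos ?_
    linear_combination r ^ 2 * ha
  conv_rhs => rw [← Nat.mod_add_div m r]
  rw [add_mul_add_div_two hr, h_multiple, mul_left_comm (m % r), pow_add, pow_add, pow_mul θ r,
    pow_mul θ r, hθ, one_pow, one_pow, mul_one, mul_one]

theorem isSecondDegree_zmodChar [NeZero r] [CommMonoid A] {θ : A} (hr : Odd r)
    (hθ : θ ^ r = 1) :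
    IsSecondDegree (AddChar.zmodChar r hθ) fun x => θ ^ (x.val * (x.val + r) / 2) where
  map_zero := by simp
  map_add x y := by
    have h_mul : AddChar.zmodChar r hθ (x * y) = θ ^ (x.val * y.val) := by
      rw [← AddChar.zmodChar_apply' hθ, Nat.cast_mul, ZMod.natCast_zmod_val, ZMod.natCast_zmod_val]
    rw [h_mul, ZMod.val_add, pow_mul_add_div_two_mod hr hθ, add_mul_add_div_two hr, pow_add,
      pow_add]

end SecondDegree

section WeilOperators

variable {R ι A : Type*} [CommRing R] [DecidableEq ι] {s t : ι}

/-- The transvection `η ↦ η + η_s e_t` of `R ^ ι`, as a permutation. -/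
def shear (hst : s ≠ t) : Equiv.Perm (ι → R) :=
  (LinearEquiv.transvection (f := LinearMap.proj (R := R) s) (v := Pi.single t 1)
    (by simp [hst])).toEquiv

theorem shear_apply (hst : s ≠ t) (η : ι → R) :
    shear hst η = Function.update η t (η t + η s) := by
  ext i
  obtain rfl | hi := eq_or_ne i t
  · simp [shear, LinearEquiv.transvection, LinearMap.transvection]
  · simp [shear, LinearEquiv.transvection, LinearMap.transvection, hi]

variable [Fintype R] [DecidableEq R] [Fintype ι]

theorem coordMatrix_fourierMatrix_mul_self [CommRing A] [IsDomain A] {ψ : AddChar R A}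
    (hψ : ψ.IsPrimitive) (t : ι) :
    coordMatrix t (fourierMatrix ψ) * coordMatrix t (fourierMatrix ψ) =
      (Fintype.card R : A) • (coordPerm t (Equiv.neg R)).permMatrix A := by
  rw [← coordMatrix_mul, fourierMatrix_mul_self hψ, coordMatrix_smul, coordMatrix_permMatrix]

theorem isUnit_coordMatrix_fourierMatrix [Field A] {ψ : AddChar R A} (hψ : ψ.IsPrimitive)
    (t : ι) : IsUnit (coordMatrix t (fourierMatrix ψ)) := by
  refine isUnit_of_mul_isUnit_left (y := coordMatrix t (fourierMatrix ψ)) ?_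
  rw [coordMatrix_fourierMatrix_mul_self hψ]
  exact (isUnit_permMatrix _).smul (Units.mk0 _ (card_ne_zero_of_isPrimitive hψ))

theorem coordPerm_neg_mul_diagonal_sq [CommSemiring A] (ψ : AddChar R A) (hst : s ≠ t) :
    ((coordPerm t (Equiv.neg R)).permMatrix A * diagonal fun ξ => ψ (ξ s * ξ t)) ^ 2 = 1 := by
  have h_invol : coordPerm t (Equiv.neg R) * coordPerm t (Equiv.neg R) = 1 := by
    ext η
    simp [coordPerm_apply]
  rw [permMatrix_mul_diagonal_sq h_invol, ← diagonal_one]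
  congr 1
  funext ξ
  simp [coordPerm_apply, hst, ← AddChar.map_add_eq_mul]

theorem coordMatrix_fourierMatrix_mul_diagonal [CommSemiring A] (ψ : AddChar R A) (hst : s ≠ t) :
    (coordMatrix t (fourierMatrix ψ) * diagonal fun ξ => ψ (ξ s * ξ t)) =
      (shear hst).permMatrix A * coordMatrix t (fourierMatrix ψ) := by
  ext η ξ
  have h_off : (∀ i, i ≠ t → shear hst η i = ξ i) ↔ ∀ i, i ≠ t → η i = ξ i :=
    forall₂_congr fun i hi => by rw [shear_apply, Function.update_of_ne hi]
  rw [mul_diagonal, PEquiv.toMatrix_toPEquiv_mul, submatrix_apply]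
  simp only [coordMatrix, fourierMatrix, of_apply, id, h_off, ite_mul, zero_mul]
  refine if_ctx_congr Iff.rfl (fun h => ?_) fun _ => rfl
  rw [← AddChar.map_add_eq_mul, shear_apply, Function.update_self, h s hst, add_mul]

theorem IsSecondDegree.shear_commutator [CommRing A] {ψ : AddChar R A} {u : R → A}
    (hu : IsSecondDegree ψ u) (hst : s ≠ t) :
    (shear hst).permMatrix A * diagonal (fun ξ : ι → R => u (ξ t)) * ((shear hst).permMatrix A)⁻¹ *
        (diagonal fun ξ : ι → R => u (ξ t))⁻¹ =
      diagonal (fun ξ => u (ξ s)) * diagonal fun ξ => ψ (ξ s * ξ t) := by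
  have h_unit : IsUnit (diagonal fun ξ : ι → R => u (ξ t)) :=
    isUnit_diagonal.mpr (Pi.isUnit_iff.mpr fun ξ => hu.isUnit (ξ t))
  have h_translate : (fun ξ : ι → R => u (ξ t)) ∘ shear hst =
      fun ξ => u (ξ s) * ψ (ξ s * ξ t) * u (ξ t) := by
    funext ξ
    simp only [Function.comp_apply, shear_apply, Function.update_self, add_comm (ξ t), hu.map_add]
    ring
  rw [permMatrix_mul_diagonal_mul_inv, h_translate, ← diagonal_mul_diagonal,
    ← diagonal_mul_diagonal,
    mul_nonsing_inv_cancel_right _ _ ((isUnit_iff_isUnit_det _).mp h_unit)]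

end WeilOperators

theorem normalization_sq_eq_one {K : Type*} [Field K] {q : ℕ} (hq : Odd q) (hq₀ : (q : K) ≠ 0)
    {δ : K} (hδ : δ ^ 4 = (q : K) ^ (2 * q)) :
    (((-(q : K)) ^ ((q - 1) / 2) * δ⁻¹) ^ 2 * q) ^ 2 = 1 := by
  have h_exp : 2 * q = (q - 1) / 2 * 4 + 2 := by
    obtain ⟨k, rfl⟩ := hq
    omega
  calc (((-(q : K)) ^ ((q - 1) / 2) * δ⁻¹) ^ 2 * q) ^ 2
      = ((-(q : K)) ^ ((q - 1) / 2)) ^ 4 * q ^ 2 * (δ ^ 4)⁻¹ := by ring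
    _ = q ^ (2 * q) * (δ ^ 4)⁻¹ := by
        rw [← pow_mul, Even.neg_pow (by simp [show Even 4 by decide]), ← pow_add, ← h_exp]
    _ = 1 := by rw [hδ, mul_inv_cancel₀ (pow_ne_zero _ hq₀)]

theorem weil_relations2_general
    {R : Type*} [CommRing R] [Fintype R] [DecidableEq R] {q : ℕ} (hq : Fintype.card R = q)
    (hq_odd : Odd q) {𝔽 : Type*} [Field 𝔽] {ψ : AddChar R 𝔽} (hψ : ψ.IsPrimitive)
    {u : R → 𝔽} (hu : IsSecondDegree ψ u) {ι : Type*} [Fintype ι] [DecidableEq ι]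
    (Cb : Matrix R R 𝔽) (hCb : ∀ i j, Cb i j = ψ (i * j))
    (lam : 𝔽) (hlam : lam = (-(q : 𝔽)) ^ ((q - 1) / 2) * Cb.det⁻¹)
    (C : ι → Matrix (ι → R) (ι → R) 𝔽)
    (hC : ∀ t η ξ, C t η ξ = if ∀ i, i ≠ t → η i = ξ i then ψ (η t * ξ t) else 0)
    (U : ι → Matrix (ι → R) (ι → R) 𝔽) (hU : ∀ t, U t = diagonal fun ξ => u (ξ t))
    (D : ι → ι → Matrix (ι → R) (ι → R) 𝔽) (hD : ∀ s t, D s t = diagonal fun ξ => ψ (ξ s * ξ t))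
    {s t : ι} (hst : s ≠ t) :
    ((lam • C t) ^ 2 * D s t) ^ 2 = 1 ∧
      IsUnit (C t) ∧ IsUnit (U t) ∧
      (C t * D s t * (C t)⁻¹) * U t * (C t * D s t * (C t)⁻¹)⁻¹ * (U t)⁻¹
        = U s * D s t := by
  subst hq
  obtain rfl : Cb = fourierMatrix ψ := Matrix.ext hCb
  have hCt : C t = coordMatrix t (fourierMatrix ψ) := Matrix.ext (hC t)
  have hC_unit : IsUnit (C t) := hCt ▸ isUnit_coordMatrix_fourierMatrix hψ t
  have h_scalar : (lam ^ 2 * Fintype.card R) ^ 2 = 1 :=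
    hlam ▸ normalization_sq_eq_one hq_odd (card_ne_zero_of_isPrimitive hψ)
      (det_fourierMatrix_pow_four hψ)
  have hX : C t * D s t * (C t)⁻¹ = (shear hst).permMatrix 𝔽 := by
    rw [hCt, hD, coordMatrix_fourierMatrix_mul_diagonal ψ hst, ← hCt,
      mul_nonsing_inv_cancel_right _ _ ((isUnit_iff_isUnit_det _).mp hC_unit)]
  refine ⟨?_, hC_unit, ?_, ?_⟩
  · rw [smul_pow, hCt, sq (coordMatrix _ _), coordMatrix_fourierMatrix_mul_self hψ, smul_smul,
      smul_mul, smul_pow, hD, coordPerm_neg_mul_diagonal_sq ψ hst, h_scalar, one_smul]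
  · exact hU t ▸ isUnit_diagonal.mpr (Pi.isUnit_iff.mpr fun ξ => hu.isUnit (ξ t))
  · rw [hX, hU, hU, hD, hu.shear_commutator hst]

/-- For `ℓ ≥ 2` and `s < t`: `((λC_t)²D_{st})² = 1`, `C_t` and `U_t` are invertible,
and for `X = C_t D_{st} C_t⁻¹` one has `X U_t X⁻¹ U_t⁻¹ = U_s D_{st}`. -/
theorem weil_relations2
    {r : ℕ} [Fact (Nat.Prime r)] (hr : Odd r)
    {𝔽 : Type*} [Field 𝔽] {θ : 𝔽} (hθ : IsPrimitiveRoot θ r)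
    {ℓ : ℕ} (hℓ : 2 ≤ ℓ)
    (Cb : Matrix (ZMod r) (ZMod r) 𝔽)
    (hCb : ∀ i j : ZMod r, Cb i j = θ ^ (i * j).val)
    (lam : 𝔽) (hlam : lam = (-(r : 𝔽)) ^ ((r - 1) / 2) * Cb.det⁻¹)
    (C : Fin ℓ → Matrix (Fin ℓ → ZMod r) (Fin ℓ → ZMod r) 𝔽)
    (hC : ∀ t η ξ, C t η ξ =
      if ∀ i, i ≠ t → η i = ξ i then θ ^ (η t * ξ t).val else 0)
    (U : Fin ℓ → Matrix (Fin ℓ → ZMod r) (Fin ℓ → ZMod r) 𝔽)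
    (hU : ∀ t, U t = Matrix.diagonal fun ξ => θ ^ ((ξ t).val * ((ξ t).val + r) / 2))
    (D : Fin ℓ → Fin ℓ → Matrix (Fin ℓ → ZMod r) (Fin ℓ → ZMod r) 𝔽)
    (hD : ∀ s t, D s t = Matrix.diagonal fun ξ => θ ^ (ξ s * ξ t).val)
    (s t : Fin ℓ) (hst : s < t) :
    ((lam • C t) ^ 2 * D s t) ^ 2 = 1 ∧
      IsUnit (C t) ∧ IsUnit (U t) ∧
      (C t * D s t * (C t)⁻¹) * U t * (C t * D s t * (C t)⁻¹)⁻¹ * (U t)⁻¹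
        = U s * D s t :=
  weil_relations2_general (ZMod.card r) hr (AddChar.zmodChar_primitive_of_primitive_root r hθ)
    (isSecondDegree_zmodChar hr hθ.pow_eq_one) Cb hCb lam hlam C
    (fun t η ξ => (hC t η ξ).trans (by congr)) U hU D hD hst.ne
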